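/- For every n ∈ ℤ, every ξ ∈ ℝ and every s > 0, the integral ∫₀^∞ K_n^α(s,s') (s')^{−iξ−1} sin α · s' ds' converges absolutely and equals λ_n(ξ) · s^{−iξ−1}, where λ_n(ξ) = sin α · ∫₀^∞ t^{1+iξ} K_n^α(t,1) dt/t (this integral also converging absolutely). In other words, t ↦ t^{−iξ−1} is a generalized eigenfunction of the n-th modal operator with eigenvalue λ_n(ξ). -/

import Mathlib

open Real

/-- Parametrization of the infinite straight cone of opening angle `2α`. -/
noncomputable def coneParam (α t θ : ℝ) : EuclideanSpace ℝ (Fin 3) :=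
  !₂[sin α * t * cos θ, sin α * t * sin θ, cos α * t]

/-- Outward unit normal of the cone. -/
noncomputable def coneNormal (α θ : ℝ) : EuclideanSpace ℝ (Fin 3) :=
  !₂[cos α * cos θ, cos α * sin θ, -sin α]

/-- The layer-potential kernel of the infinite straight cone. -/
noncomputable def coneKernel (α t θ t' θ' : ℝ) : ℝ :=
  (inner ℝ (coneParam α t θ - coneParam α t' θ') (coneNormal α θ) : ℝ) /
    ‖coneParam α t' θ' - coneParam α t θ‖ ^ 3

/-- The `n`-th modal kernel `K_n^α(t,t') = (1/(2π)) ∫₀^{2π} e^{−inθ} K^{Γ_α}(t,θ,t',0) dθ`. -/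
noncomputable def modalKernel (α : ℝ) (n : ℤ) (t t' : ℝ) : ℂ :=
  ((1 / (2 * π) : ℝ) : ℂ) *
    ∫ θ in (0:ℝ)..(2 * π), Complex.exp (-Complex.I * (n : ℂ) * (θ : ℂ)) * (coneKernel α t θ t' 0 : ℂ)

open MeasureTheory

/-!
Since `coneParam α (c * t) θ = c • coneParam α t θ`, the modal kernel is homogeneous of degree `-2`,
so `K_n(s, s') = s' ^ (-2) * K_n(s / s', 1)` and applying the modal operator to `s' ↦ s' ^ (-z)`
gives the Mellin transform at `-z` of `s' ↦ K_n(s / s', 1)`. Inversion and dilation turn it into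
`s ^ (-z)` times the Mellin transform at `z` of `t ↦ K_n(t, 1)`.

This last transform converges absolutely for `0 < re z < 3`: the kernel is bounded near `t = 0` and
is `O(t ^ (-3))` at infinity, while near `t = 1` the interpolation
`((t - 1) ^ 2 + v) ^ (3 / 2) ≥ |t - 1| ^ (1 / 2) * v ^ (5 / 4)` with `v` comparable to `1 - cos θ`
splits the singularity into integrable radial and angular factors.
-/

open Filter Topology Asymptotics

section RealEstimates

lemma div_sqrt_sq_add_pow_three_le {a v : ℝ} (ha : a ≠ 0) (hv : 0 ≤ v) :
    v / √(a ^ 2 + v) ^ 3 ≤ |a| ^ (-(1 / 2) : ℝ) * v ^ (-(1 / 4) : ℝ) := by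
  rcases hv.eq_or_lt with rfl | hv
  · simp only [zero_div]
    positivity
  have hD : 0 < a ^ 2 + v := by positivity
  have hradial : |a| ^ (1 / 2 : ℝ) ≤ (a ^ 2 + v) ^ (1 / 4 : ℝ) :=
    calc |a| ^ (1 / 2 : ℝ) = (a ^ 2) ^ (1 / 4 : ℝ) := by
          rw [← sq_abs, ← rpow_natCast_mul (abs_nonneg a)]
          norm_num
      _ ≤ (a ^ 2 + v) ^ (1 / 4 : ℝ) := by gcongr; linarith
  have hangular : v ^ (5 / 4 : ℝ) ≤ (a ^ 2 + v) ^ (5 / 4 : ℝ) := by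
    gcongr
    linarith [sq_nonneg a]
  have hsplit : √(a ^ 2 + v) ^ 3 = (a ^ 2 + v) ^ (1 / 4 : ℝ) * (a ^ 2 + v) ^ (5 / 4 : ℝ) := by
    rw [← rpow_add hD, sqrt_eq_rpow, ← rpow_mul_natCast hD.le]
    norm_num
  have ha' : 0 < |a| := abs_pos.2 ha
  calc v / √(a ^ 2 + v) ^ 3 ≤ v / (|a| ^ (1 / 2 : ℝ) * v ^ (5 / 4 : ℝ)) := by
        rw [hsplit]
        gcongr
    _ = |a| ^ (-(1 / 2) : ℝ) * v ^ (-(1 / 4) : ℝ) := by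
        rw [show (5 / 4 : ℝ) = 1 + 1 / 4 by norm_num, rpow_add hv, rpow_one,
          rpow_neg ha'.le, rpow_neg hv.le]
        field_simp

lemma locallyIntegrable_abs_sub_rpow {r : ℝ} (hr : -1 < r) (c : ℝ) :
    LocallyIntegrable fun x : ℝ => |x - c| ^ r := by
  have hcentred : LocallyIntegrable fun x : ℝ => |x| ^ r :=
    locallyIntegrable_of_norm_le_rpow (C := 1) (α := -r) (by simp) (by simpa using by linarith)
      (ae_of_all _ fun x => by simp [abs_rpow_of_nonneg])
      (Measurable.aestronglyMeasurable (by fun_prop))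
  rw [locallyIntegrable_iff]
  intro K hK
  exact ((measurePreserving_sub_right volume c).integrableOn_image
    (measurableEmbedding_subRight c)).1
    (hcentred.integrableOn_isCompact (hK.image (continuous_sub_right c)))

lemma one_sub_cos_rpow_le {r x : ℝ} (hr : r ≤ 0) (hx0 : x ≠ 0) (hx : |x| ≤ π) :
    (1 - cos x) ^ r ≤ (2 / π ^ 2) ^ r * |x| ^ (2 * r) :=
  calc (1 - cos x) ^ r ≤ (2 / π ^ 2 * |x| ^ 2) ^ r := by
        refine rpow_le_rpow_of_nonpos (by positivity) ?_ hr
        rw [sq_abs]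
        linarith [cos_le_one_sub_mul_cos_sq hx]
    _ = (2 / π ^ 2) ^ r * |x| ^ (2 * r) := by
        rw [mul_rpow (by positivity) (by positivity), ← rpow_natCast_mul (abs_nonneg x)]
        norm_num

lemma intervalIntegrable_one_sub_cos_rpow {r : ℝ} (hr : -(1 / 2) < r) (hr0 : r ≤ 0) (a b : ℝ) :
    IntervalIntegrable (fun θ => (1 - cos θ) ^ r) volume a b := by
  have hperiodic : Function.Periodic (fun θ => (1 - cos θ) ^ r) (2 * π) := fun θ => by simp
  refine hperiodic.intervalIntegrable (t := -π) two_pi_pos.ne' ?_ a b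
  rw [show -π + 2 * π = π by ring,
    intervalIntegrable_iff_integrableOn_Icc_of_le (by linarith [pi_pos])]
  have hdom : LocallyIntegrable fun x : ℝ => |x| ^ (2 * r) := by
    simpa using locallyIntegrable_abs_sub_rpow (r := 2 * r) (by linarith) 0
  refine ((hdom.integrableOn_isCompact isCompact_Icc).const_mul ((2 / π ^ 2) ^ r)).mono'
    (Measurable.aestronglyMeasurable (by fun_prop)) ?_
  filter_upwards [ae_restrict_mem measurableSet_Icc, ae_restrict_of_ae (Measure.ae_ne volume 0)]
    with x hx hx0
  rw [norm_of_nonneg (rpow_nonneg (sub_nonneg.2 (cos_le_one x)) r)]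
  exact one_sub_cos_rpow_le hr0 hx0 (abs_le.2 hx)

end RealEstimates

section MellinInversion

variable {E : Type*} [NormedAddCommGroup E] [NormedSpace ℂ E] {s : ℝ}

lemma mellinConvergent_comp_const_div (hs : 0 < s) {f : ℝ → E} {z : ℂ} :
    MellinConvergent (fun x => f (s / x)) (-z) ↔ MellinConvergent f z := by
  have hdilate := MellinConvergent.comp_mul_left (f := fun x => f x⁻¹) (s := -z) (inv_pos.2 hs)
  have hinvert := MellinConvergent.comp_rpow (f := f) (s := -z) (a := -1) (by norm_num)
  simp only [mul_inv_rev, inv_inv] at hdilate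
  simp only [rpow_neg_one, Complex.ofReal_neg, Complex.ofReal_one, neg_div_neg_eq, div_one]
    at hinvert
  simp only [div_eq_inv_mul, hdilate, hinvert]

lemma mellin_comp_const_div (hs : 0 < s) (f : ℝ → E) (z : ℂ) :
    mellin (fun x => f (s / x)) (-z) = (s : ℂ) ^ (-z) • mellin f z := by
  have hdilate := mellin_comp_mul_left (fun x => f x⁻¹) (-z) (inv_pos.2 hs)
  simp only [mul_inv_rev, inv_inv, mellin_comp_inv, neg_neg] at hdilate
  simp only [div_eq_inv_mul, hdilate]
  rw [Complex.ofReal_inv, Complex.inv_cpow _ _ (by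
    rw [Complex.arg_ofReal_of_nonneg hs.le]; exact pi_pos.ne), Complex.cpow_neg]

end MellinInversion

section ConeKernel

variable (α t θ t' θ' : ℝ)

lemma inner_coneParam_sub_coneNormal :
    inner ℝ (coneParam α t θ - coneParam α t' θ') (coneNormal α θ) =
      sin α * cos α * t' * (1 - cos (θ - θ')) := by
  simp only [coneParam, coneNormal, PiLp.inner_apply, PiLp.sub_apply, RCLike.inner_apply,
    ringHom_apply, Fin.sum_univ_three, Fin.isValue, Matrix.cons_val, cos_sub]
  linear_combination sin α * cos α * t * sin_sq_add_cos_sq θ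

lemma norm_coneParam_sub_sq :
    ‖coneParam α t' θ' - coneParam α t θ‖ ^ 2 =
      (t - t') ^ 2 + 2 * sin α ^ 2 * t * t' * (1 - cos (θ - θ')) := by
  simp only [coneParam, EuclideanSpace.norm_sq_eq, PiLp.sub_apply, norm_eq_abs, sq_abs,
    Fin.sum_univ_three, Fin.isValue, Matrix.cons_val, cos_sub]
  linear_combination sin α ^ 2 * t ^ 2 * sin_sq_add_cos_sq θ +
    sin α ^ 2 * t' ^ 2 * sin_sq_add_cos_sq θ' + (t - t') ^ 2 * sin_sq_add_cos_sq α

lemma coneKernel_eq :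
    coneKernel α t θ t' θ' = sin α * cos α * t' * (1 - cos (θ - θ')) /
      √((t - t') ^ 2 + 2 * sin α ^ 2 * t * t' * (1 - cos (θ - θ'))) ^ 3 := by
  rw [coneKernel, inner_coneParam_sub_coneNormal, ← norm_coneParam_sub_sq,
    sqrt_sq (norm_nonneg _)]

-- At `sin α = 0` both sides vanish, the right one because `cos α / 0 = 0`.
lemma coneKernel_eq_mul_div {t : ℝ} (ht : t ≠ 0) :
    coneKernel α t θ t' θ' = cos α / (2 * sin α) * t⁻¹ *
      (2 * sin α ^ 2 * t * t' * (1 - cos (θ - θ')) /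
        √((t - t') ^ 2 + 2 * sin α ^ 2 * t * t' * (1 - cos (θ - θ'))) ^ 3) := by
  rw [coneKernel_eq, mul_div_assoc']
  congr 1
  rcases eq_or_ne (sin α) 0 with hα | hα
  · simp [hα]
  · field_simp

lemma coneParam_mul (c : ℝ) : coneParam α (c * t) θ = c • coneParam α t θ := by
  ext i
  fin_cases i <;> simp [coneParam, mul_left_comm, mul_assoc]

lemma coneKernel_mul_mul {c : ℝ} (hc : 0 < c) :
    coneKernel α (c * t) θ (c * t') θ' = (c ^ 2)⁻¹ * coneKernel α t θ t' θ' := by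
  simp only [coneKernel, coneParam_mul, ← smul_sub, real_inner_smul_left, norm_smul,
    norm_of_nonneg hc.le]
  field_simp

variable {t t'}

lemma abs_coneKernel_le_div_abs_sub_pow_three (ht : 0 ≤ t) (ht' : 0 ≤ t') (hne : t ≠ t') :
    |coneKernel α t θ t' θ'| ≤ 2 * t' / |t - t'| ^ 3 := by
  have hu : 0 ≤ 1 - cos (θ - θ') := sub_nonneg.2 (cos_le_one _)
  have hu2 : 1 - cos (θ - θ') ≤ 2 := by linarith [neg_one_le_cos (θ - θ')]
  have hsep : 0 < |t - t'| := abs_pos.2 (sub_ne_zero.2 hne)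
  have hdist : |t - t'| ≤
      √((t - t') ^ 2 + 2 * sin α ^ 2 * t * t' * (1 - cos (θ - θ'))) :=
    abs_le_sqrt (le_add_of_nonneg_right (by positivity))
  have htrig : |sin α| * |cos α| ≤ 1 :=
    mul_le_one₀ (abs_sin_le_one α) (abs_nonneg _) (abs_cos_le_one α)
  have hnum : |sin α * cos α * t' * (1 - cos (θ - θ'))| ≤ 2 * t' := by
    rw [abs_mul, abs_mul, abs_mul, abs_of_nonneg hu, abs_of_nonneg ht']
    calc |sin α| * |cos α| * t' * (1 - cos (θ - θ')) ≤ 1 * t' * 2 := by gcongr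
      _ = 2 * t' := by ring
  rw [coneKernel_eq, abs_div, abs_pow, abs_of_nonneg (sqrt_nonneg _)]
  exact div_le_div₀ (by positivity) hnum (pow_pos hsep 3) (by gcongr)

lemma abs_coneKernel_le_rpow_mul_rpow (ht : 0 < t) (ht' : 0 ≤ t') (hne : t ≠ t') :
    |coneKernel α t θ t' θ'| ≤ |cos α / (2 * sin α)| * (2 * sin α ^ 2 * t') ^ (-(1 / 4) : ℝ) *
      (t ^ (-(5 / 4) : ℝ) * |t - t'| ^ (-(1 / 2) : ℝ)) * (1 - cos (θ - θ')) ^ (-(1 / 4) : ℝ) := by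
  have hu : 0 ≤ 1 - cos (θ - θ') := sub_nonneg.2 (cos_le_one _)
  have hfactor : (2 * sin α ^ 2 * t * t' * (1 - cos (θ - θ'))) ^ (-(1 / 4) : ℝ) =
      (2 * sin α ^ 2 * t') ^ (-(1 / 4) : ℝ) * t ^ (-(1 / 4) : ℝ) *
        (1 - cos (θ - θ')) ^ (-(1 / 4) : ℝ) := by
    rw [← mul_rpow (by positivity) ht.le, ← mul_rpow (by positivity) hu,
      mul_right_comm (2 * sin α ^ 2)]
  have htpow : t ^ (-(5 / 4) : ℝ) = t⁻¹ * t ^ (-(1 / 4) : ℝ) := by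
    rw [← rpow_neg_one, ← rpow_add ht]
    norm_num
  have hv : 0 ≤ 2 * sin α ^ 2 * t * t' * (1 - cos (θ - θ')) := by positivity
  rw [coneKernel_eq_mul_div α θ t' θ' ht.ne']
  set v := 2 * sin α ^ 2 * t * t' * (1 - cos (θ - θ'))
  calc |cos α / (2 * sin α) * t⁻¹ * (v / √((t - t') ^ 2 + v) ^ 3)|
      = |cos α / (2 * sin α)| * t⁻¹ * (v / √((t - t') ^ 2 + v) ^ 3) := by
        rw [abs_mul, abs_mul, abs_of_pos (inv_pos.2 ht),
          abs_of_nonneg (div_nonneg hv (by positivity))]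
    _ ≤ |cos α / (2 * sin α)| * t⁻¹ * (|t - t'| ^ (-(1 / 2) : ℝ) * v ^ (-(1 / 4) : ℝ)) := by
        gcongr
        exact div_sqrt_sq_add_pow_three_le (sub_ne_zero.2 hne) hv
    _ = _ := by
        rw [hfactor, htpow]
        ring

end ConeKernel

section ModalKernel

variable (α : ℝ) (n : ℤ) {t t' : ℝ}

lemma modalKernel_mul_mul {c : ℝ} (hc : 0 < c) (t t' : ℝ) :
    modalKernel α n (c * t) (c * t') = ((c : ℂ) ^ 2)⁻¹ * modalKernel α n t t' := by
  simp only [modalKernel, coneKernel_mul_mul _ _ _ _ _ hc]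
  rw [mul_left_comm]
  congr 1
  rw [← intervalIntegral.integral_const_mul]
  congr with θ
  push_cast
  ring

lemma modalKernel_eq_inv_sq_mul (t : ℝ) (ht' : 0 < t') :
    modalKernel α n t t' = ((t' : ℂ) ^ 2)⁻¹ * modalKernel α n (t / t') 1 := by
  rw [← modalKernel_mul_mul α n ht', mul_div_cancel₀ t ht'.ne', mul_one]

lemma measurable_modalKernel (t' : ℝ) : Measurable fun t => modalKernel α n t t' := by
  simp only [modalKernel, coneKernel_eq, intervalIntegral.integral_of_le two_pi_pos.le]
  refine Measurable.const_mul (StronglyMeasurable.measurable ?_) _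
  refine StronglyMeasurable.integral_prod_right (Measurable.stronglyMeasurable ?_)
  unfold Function.uncurry
  fun_prop

lemma norm_modalKernel_le_of_abs_coneKernel_le {b : ℝ → ℝ}
    (hb : IntervalIntegrable b volume 0 (2 * π)) (hle : ∀ θ, |coneKernel α t θ t' 0| ≤ b θ) :
    ‖modalKernel α n t t'‖ ≤ 1 / (2 * π) * ∫ θ in (0 : ℝ)..(2 * π), b θ := by
  rw [modalKernel, norm_mul, Complex.norm_real, norm_of_nonneg (by positivity)]
  gcongr
  refine intervalIntegral.norm_integral_le_of_norm_le two_pi_pos.le (ae_of_all _ fun θ _ => ?_) hb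
  rw [norm_mul, Complex.norm_real, Complex.norm_exp]
  simpa using hle θ

lemma norm_modalKernel_le_div_abs_sub_pow_three (ht : 0 ≤ t) (ht' : 0 ≤ t') (hne : t ≠ t') :
    ‖modalKernel α n t t'‖ ≤ 2 * t' / |t - t'| ^ 3 := by
  refine (norm_modalKernel_le_of_abs_coneKernel_le α n intervalIntegrable_const fun θ =>
    abs_coneKernel_le_div_abs_sub_pow_three α θ 0 ht ht' hne).trans_eq ?_
  rw [intervalIntegral.integral_const, sub_zero, smul_eq_mul]
  field_simp

lemma exists_norm_modalKernel_le_rpow_mul_rpow (ht' : 0 ≤ t') :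
    ∃ C, ∀ t, 0 < t → t ≠ t' →
      ‖modalKernel α n t t'‖ ≤ C * (t ^ (-(5 / 4) : ℝ) * |t - t'| ^ (-(1 / 2) : ℝ)) := by
  refine ⟨1 / (2 * π) * (|cos α / (2 * sin α)| * (2 * sin α ^ 2 * t') ^ (-(1 / 4) : ℝ) *
    ∫ θ in (0 : ℝ)..(2 * π), (1 - cos θ) ^ (-(1 / 4) : ℝ)), fun t ht hne => ?_⟩
  have hangular := intervalIntegrable_one_sub_cos_rpow (r := -(1 / 4)) (by norm_num)
    (by norm_num) 0 (2 * π)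
  refine (norm_modalKernel_le_of_abs_coneKernel_le α n (hangular.const_mul _) fun θ => by
    simpa only [sub_zero] using abs_coneKernel_le_rpow_mul_rpow α θ 0 ht ht' hne).trans_eq ?_
  rw [intervalIntegral.integral_const_mul]
  ring

lemma locallyIntegrableOn_modalKernel (ht' : 0 ≤ t') :
    LocallyIntegrableOn (fun t => modalKernel α n t t') (Set.Ioi 0) := by
  obtain ⟨C, hC⟩ := exists_norm_modalKernel_le_rpow_mul_rpow α n ht'
  have hweight : ContinuousOn (fun t : ℝ => t ^ (-(5 / 4) : ℝ)) (Set.Ioi 0) :=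
    fun t ht => (continuousAt_rpow_const t _ (.inl (ne_of_gt ht))).continuousWithinAt
  have hdom := ((locallyIntegrable_abs_sub_rpow (r := -(1 / 2)) (by norm_num)
    t').locallyIntegrableOn (Set.Ioi 0)).continuousOn_mul hweight isOpen_Ioi.isLocallyClosed
  rw [locallyIntegrableOn_iff isOpen_Ioi.isLocallyClosed] at hdom ⊢
  intro K hK hKc
  refine ((hdom K hK hKc).const_mul C).mono' (measurable_modalKernel α n t').aestronglyMeasurable ?_
  filter_upwards [ae_restrict_mem hKc.measurableSet, ae_restrict_of_ae (Measure.ae_ne volume t')]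
    with t ht hne
  exact hC t (hK ht) hne

lemma modalKernel_isBigO_atTop (ht' : 0 ≤ t') :
    (fun t => modalKernel α n t t') =O[atTop] fun t : ℝ => t ^ (-3 : ℝ) := by
  refine .of_bound (16 * t') ?_
  filter_upwards [eventually_gt_atTop (2 * t'), eventually_gt_atTop 0] with t ht ht0
  have hhalf : t / 2 ≤ |t - t'| := (by linarith : t / 2 ≤ t - t').trans (le_abs_self _)
  calc ‖modalKernel α n t t'‖ ≤ 2 * t' / |t - t'| ^ 3 :=
        norm_modalKernel_le_div_abs_sub_pow_three α n ht0.le ht' (by linarith)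
    _ ≤ 2 * t' / (t / 2) ^ 3 := by gcongr
    _ = 16 * t' * ‖t ^ (-3 : ℝ)‖ := by
        rw [norm_of_nonneg (by positivity), rpow_neg ht0.le, rpow_ofNat]
        ring

lemma modalKernel_isBigO_one_nhdsGT_zero (ht' : 0 < t') :
    (fun t => modalKernel α n t t') =O[𝓝[>] 0] fun _ : ℝ => (1 : ℝ) := by
  have hcont : ContinuousAt (fun t => 2 * t' / |t - t'| ^ 3) 0 :=
    ContinuousAt.div (by fun_prop) (by fun_prop) (by simp [ht'.ne'])
  refine IsBigO.trans (.of_bound 1 ?_) ((hcont.tendsto.mono_left nhdsWithin_le_nhds).isBigO_one ℝ)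
  filter_upwards [Ioo_mem_nhdsGT ht'] with t ht
  rw [one_mul]
  exact (norm_modalKernel_le_div_abs_sub_pow_three α n ht.1.le ht'.le ht.2.ne).trans
    (le_norm_self _)

lemma mellinConvergent_modalKernel {z : ℂ} (hz0 : 0 < z.re) (hz3 : z.re < 3) (ht' : 0 < t') :
    MellinConvergent (fun t => modalKernel α n t t') z :=
  mellinConvergent_of_isBigO_rpow (locallyIntegrableOn_modalKernel α n ht'.le)
    (modalKernel_isBigO_atTop α n ht'.le) hz3
    (by simpa only [neg_zero, rpow_zero] using modalKernel_isBigO_one_nhdsGT_zero α n ht') hz0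

end ModalKernel

lemma cpow_mul_mul_inv_eq_cpow_sub_one_smul {t : ℝ} (ht : t ≠ 0) (z w : ℂ) :
    (t : ℂ) ^ z * w * (t : ℂ)⁻¹ = (t : ℂ) ^ (z - 1) • w := by
  rw [Complex.cpow_sub _ _ (Complex.ofReal_ne_zero.2 ht), Complex.cpow_one, smul_eq_mul]
  ring

lemma modalKernel_mul_cpow_mul_eq (α : ℝ) (n : ℤ) (z : ℂ) (s : ℝ) {x : ℝ} (hx : 0 < x) :
    modalKernel α n s x * (x : ℂ) ^ (-z) * ((sin α * x : ℝ) : ℂ) =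
      (sin α : ℂ) * ((x : ℂ) ^ (-z - 1) • modalKernel α n (s / x) 1) := by
  have hx' : (x : ℂ) ≠ 0 := Complex.ofReal_ne_zero.2 hx.ne'
  rw [modalKernel_eq_inv_sq_mul α n s hx, Complex.cpow_sub _ _ hx', Complex.cpow_one, smul_eq_mul]
  push_cast
  field_simp

theorem modal_generalized_eigenfunction_general (α : ℝ) (n : ℤ) {z : ℂ} (hz0 : 0 < z.re)
    (hz3 : z.re < 3) {s : ℝ} (hs : 0 < s) :
    IntegrableOn (fun t : ℝ => (t : ℂ) ^ z * modalKernel α n t 1 * (t : ℂ)⁻¹) (Set.Ioi 0) ∧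
    IntegrableOn
      (fun s' : ℝ => modalKernel α n s s' * (s' : ℂ) ^ (-z) * ((sin α * s' : ℝ) : ℂ))
      (Set.Ioi 0) ∧
    ∫ s' in Set.Ioi (0 : ℝ), modalKernel α n s s' * (s' : ℂ) ^ (-z) * ((sin α * s' : ℝ) : ℂ)
      = (((sin α : ℝ) : ℂ) *
          ∫ t in Set.Ioi (0 : ℝ), (t : ℂ) ^ z * modalKernel α n t 1 * (t : ℂ)⁻¹) *
        (s : ℂ) ^ (-z) := by
  have hprofile : Set.EqOn (fun t : ℝ => (t : ℂ) ^ z * modalKernel α n t 1 * (t : ℂ)⁻¹)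
      (fun t : ℝ => (t : ℂ) ^ (z - 1) • modalKernel α n t 1) (Set.Ioi 0) :=
    fun t ht => cpow_mul_mul_inv_eq_cpow_sub_one_smul (ne_of_gt ht) z _
  have hoperator := fun (x : ℝ) (hx : x ∈ Set.Ioi 0) => modalKernel_mul_cpow_mul_eq α n z s hx
  have hconv := mellinConvergent_modalKernel α n hz0 hz3 one_pos
  refine ⟨hconv.congr_fun hprofile.symm measurableSet_Ioi, IntegrableOn.congr_fun
    (((mellinConvergent_comp_const_div hs).2 hconv).const_mul (sin α : ℂ))
    (fun x hx => (hoperator x hx).symm) measurableSet_Ioi, ?_⟩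
  rw [setIntegral_congr_fun measurableSet_Ioi hprofile,
    setIntegral_congr_fun measurableSet_Ioi hoperator, integral_const_mul]
  change _ * mellin _ (-z) = _ * mellin _ z * _
  rw [mellin_comp_const_div hs (fun t => modalKernel α n t 1), smul_eq_mul]
  ring

/-- The power functions `t ↦ t^{−iξ−1}` are generalized eigenfunctions of the modal
operators on the infinite straight cone: for every `n`, `ξ` and `s > 0`, the integral
`∫₀^∞ K_n^α(s,s') (s')^{−iξ−1} sin α · s' ds'` converges absolutely and equals
`λ_n(ξ) · s^{−iξ−1}`, where `λ_n(ξ) = sin α · ∫₀^∞ t^{1+iξ} K_n^α(t,1) dt/t` (this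
integral also converging absolutely). -/
theorem modal_generalized_eigenfunction (α : ℝ) (hα0 : 0 < α) (hαπ : α < π)
    (hα2 : α ≠ π / 2) (n : ℤ) (ξ s : ℝ) (hs : 0 < s) :
    IntegrableOn
      (fun t : ℝ => (t : ℂ) ^ (1 + Complex.I * (ξ : ℂ)) * modalKernel α n t 1 * (t : ℂ)⁻¹)
      (Set.Ioi 0) ∧
    IntegrableOn
      (fun s' : ℝ => modalKernel α n s s' * (s' : ℂ) ^ (-(Complex.I * (ξ : ℂ)) - 1) *
        ((sin α * s' : ℝ) : ℂ))
      (Set.Ioi 0) ∧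
    ∫ s' in Set.Ioi (0:ℝ), modalKernel α n s s' * (s' : ℂ) ^ (-(Complex.I * (ξ : ℂ)) - 1) *
        ((sin α * s' : ℝ) : ℂ)
      = (((sin α : ℝ) : ℂ) *
          ∫ t in Set.Ioi (0:ℝ),
            (t : ℂ) ^ (1 + Complex.I * (ξ : ℂ)) * modalKernel α n t 1 * (t : ℂ)⁻¹) *
        (s : ℂ) ^ (-(Complex.I * (ξ : ℂ)) - 1) := by
  simpa only [neg_add_rev, ← sub_eq_add_neg] using modal_generalized_eigenfunction_general α n
    (z := 1 + Complex.I * ξ) (by simp) (by norm_num) hs
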